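/- The group G is nilpotent of nilpotency class at most 3; that is, the fourth term of the lower central series of G is the trivial subgroup. -/

import Mathlib

noncomputable section

open Matrix

/-- The upper-left 6×6 block `A₁(x)`. Coordinates: `x 0 = x₁`, ..., `x 6 = x₇`. -/
def A1 (x : Fin 7 → ℝ) : Matrix (Fin 6) (Fin 6) ℝ :=
  !![1, -x 1, x 0, x 3, -(x 0 * x 1), x 5;
     0, 1, 0, -x 0, x 0, x 0 ^ 2 / 2;
     0, 0, 1, 0, -x 1, -x 3;
     0, 0, 0, 1, 0, 0;
     0, 0, 0, 0, 1, x 0;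
     0, 0, 0, 0, 0, 1]

/-- The lower-right 6×6 block `A₂(x)`, obtained from `A₁(x)` by replacing
`x₂, x₄, x₆` with `x₃, x₅, x₇`. -/
def A2 (x : Fin 7 → ℝ) : Matrix (Fin 6) (Fin 6) ℝ :=
  !![1, -x 2, x 0, x 4, -(x 0 * x 2), x 6;
     0, 1, 0, -x 0, x 0, x 0 ^ 2 / 2;
     0, 0, 1, 0, -x 2, -x 4;
     0, 0, 0, 1, 0, 0;
     0, 0, 0, 0, 1, x 0;
     0, 0, 0, 0, 0, 1]

/-- The block-diagonal 12×12 matrix `a(x) = diag(A₁(x), A₂(x))`. -/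
def aMat (x : Fin 7 → ℝ) : Matrix (Fin 6 ⊕ Fin 6) (Fin 6 ⊕ Fin 6) ℝ :=
  Matrix.fromBlocks (A1 x) 0 0 (A2 x)

/-- The set `G = {a(x) : x ∈ ℝ⁷}` of matrices. -/
def GSet : Set (Matrix (Fin 6 ⊕ Fin 6) (Fin 6 ⊕ Fin 6) ℝ) :=
  {A | ∃ x : Fin 7 → ℝ, A = aMat x}
def mulv (x y : Fin 7 → ℝ) : Fin 7 → ℝ :=
  ![x 0 + y 0, x 1 + y 1, x 2 + y 2, x 3 + y 3 + x 1 * y 0, x 4 + y 4 + x 2 * y 0,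
    x 5 + y 5 - x 1 * y 0 ^ 2 / 2 - x 0 * y 3 - x 0 * x 1 * y 0,
    x 6 + y 6 - x 2 * y 0 ^ 2 / 2 - x 0 * y 4 - x 0 * x 2 * y 0]

lemma A1_mul (x y : Fin 7 → ℝ) : A1 x * A1 y = A1 (mulv x y) := by
  ext i j
  fin_cases i <;> fin_cases j <;>
    simp [A1, mulv, Matrix.mul_apply, Fin.sum_univ_succ] <;> ring

lemma A2_mul (x y : Fin 7 → ℝ) : A2 x * A2 y = A2 (mulv x y) := by
  ext i j
  fin_cases i <;> fin_cases j <;>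
    simp [A2, mulv, Matrix.mul_apply, Fin.sum_univ_succ] <;> ring

lemma aMat_mul (x y : Fin 7 → ℝ) : aMat x * aMat y = aMat (mulv x y) := by
  simp [aMat, Matrix.fromBlocks_multiply, A1_mul, A2_mul]

lemma aMat_zero : aMat 0 = 1 := by
  have h1 : A1 0 = 1 := by
    ext i j
    fin_cases i <;> fin_cases j <;> simp [A1]
  have h2 : A2 0 = 1 := by
    ext i j
    fin_cases i <;> fin_cases j <;> simp [A2]
  simp [aMat, h1, h2]

lemma aMat_inj {x y : Fin 7 → ℝ} (h : aMat x = aMat y) : x = y := by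
  obtain ⟨h1, -, -, h2⟩ := Matrix.fromBlocks_inj.1 h
  have a0 := congrFun (congrFun h1 0) 2
  have a1 := congrFun (congrFun h1 0) 1
  have a3 := congrFun (congrFun h1 0) 3
  have a5 := congrFun (congrFun h1 0) 5
  have a2 := congrFun (congrFun h2 0) 1
  have a4 := congrFun (congrFun h2 0) 3
  have a6 := congrFun (congrFun h2 0) 5
  simp [A1, A2] at a0 a1 a2 a3 a4 a5 a6
  ext i
  fin_cases i <;> assumption

lemma mulv_eqs {x y z : Fin 7 → ℝ} (h : z = mulv x y) :
    z 0 = x 0 + y 0 ∧ z 1 = x 1 + y 1 ∧ z 2 = x 2 + y 2 ∧ z 3 = x 3 + y 3 + x 1 * y 0 ∧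
    z 4 = x 4 + y 4 + x 2 * y 0 ∧
    z 5 = x 5 + y 5 - x 1 * y 0 ^ 2 / 2 - x 0 * y 3 - x 0 * x 1 * y 0 ∧
    z 6 = x 6 + y 6 - x 2 * y 0 ^ 2 / 2 - x 0 * y 4 - x 0 * x 2 * y 0 := by
  subst h
  exact ⟨rfl, rfl, rfl, rfl, rfl, rfl, rfl⟩

open scoped commutatorElement in
/-- Abstract version: a group with faithful coordinates multiplying by `mulv`. -/
lemma lcs_of_coords {G : Type*} [Group G] (co : G → Fin 7 → ℝ)
    (inj : Function.Injective co) (one : co 1 = 0)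
    (mul : ∀ g h, co (g * h) = mulv (co g) (co h)) :
    Subgroup.lowerCentralSeries (⊤ : Subgroup G) 3 = ⊥ := by
  have inv : ∀ g, mulv (co g⁻¹) (co g) = 0 := fun g => by rw [← mul, inv_mul_cancel, one]
  have comm : ∀ g h : G, mulv (co ⁅g, h⁆) (mulv (co h) (co g)) = mulv (co g) (co h) := by
    intro g h
    rw [← mul, ← mul, ← mul]
    congr 1
    simp [commutatorElement_def, mul_assoc]
  let K1 : Subgroup G :=
    { carrier := {g | co g 0 = 0 ∧ co g 1 = 0 ∧ co g 2 = 0}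
      one_mem' := by simp [one]
      mul_mem' := by
        rintro a b ⟨h0, h1, h2⟩ ⟨k0, k1, k2⟩
        obtain ⟨e0, e1, e2, -⟩ := mulv_eqs (mul a b)
        exact ⟨by linarith, by linarith, by linarith⟩
      inv_mem' := by
        rintro a ⟨h0, h1, h2⟩
        obtain ⟨e0, e1, e2, -⟩ := mulv_eqs (inv a).symm
        simp only [Pi.zero_apply] at e0 e1 e2
        exact ⟨by linarith, by linarith, by linarith⟩ }
  let K2 : Subgroup G :=
    { carrier := {g | (co g 0 = 0 ∧ co g 1 = 0 ∧ co g 2 = 0) ∧ co g 3 = 0 ∧ co g 4 = 0}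
      one_mem' := by simp [one]
      mul_mem' := by
        rintro a b ⟨⟨h0, h1, h2⟩, h3, h4⟩ ⟨⟨k0, k1, k2⟩, k3, k4⟩
        obtain ⟨e0, e1, e2, e3, e4, -⟩ := mulv_eqs (mul a b)
        simp only [h0, h1, h2, h3, h4, k0, k1, k2, k3, k4] at e0 e1 e2 e3 e4
        exact ⟨⟨by linarith, by linarith, by linarith⟩, by linarith, by linarith⟩
      inv_mem' := by
        rintro a ⟨⟨h0, h1, h2⟩, h3, h4⟩
        obtain ⟨e0, e1, e2, e3, e4, -⟩ := mulv_eqs (inv a).symm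
        simp only [Pi.zero_apply, h0, h1, h2, h3, h4, mul_zero] at e0 e1 e2 e3 e4
        exact ⟨⟨by linarith, by linarith, by linarith⟩, by linarith, by linarith⟩ }
  have hK1 : ∀ g h : G, ⁅g, h⁆ ∈ K1 := by
    intro g h
    obtain ⟨e0, e1, e2, -⟩ := mulv_eqs (comm g h).symm
    obtain ⟨f0, f1, f2, -⟩ := mulv_eqs (rfl : mulv (co g) (co h) = _)
    obtain ⟨d0, d1, d2, -⟩ := mulv_eqs (rfl : mulv (co h) (co g) = _)
    exact ⟨by linarith, by linarith, by linarith⟩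
  have l1 : Subgroup.lowerCentralSeries (⊤ : Subgroup G) 1 ≤ K1 :=
    Subgroup.commutator_le.2 fun g _ h _ => hK1 g h
  have l2 : Subgroup.lowerCentralSeries (⊤ : Subgroup G) 2 ≤ K2 := by
    refine Subgroup.commutator_le.2 fun g hg h _ => ?_
    obtain ⟨g0, g1, g2⟩ := l1 hg
    obtain ⟨c0, c1, c2⟩ := hK1 g h
    obtain ⟨e0, e1, e2, e3, e4, -⟩ := mulv_eqs (comm g h).symm
    obtain ⟨f0, f1, f2, f3, f4, -⟩ := mulv_eqs (rfl : mulv (co g) (co h) = _)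
    obtain ⟨d0, d1, d2, d3, d4, -⟩ := mulv_eqs (rfl : mulv (co h) (co g) = _)
    simp only [g0, g1, g2, c0, c1, c2, zero_mul, mul_zero] at e3 e4 f3 f4 d3 d4
    exact ⟨⟨c0, c1, c2⟩, by linarith, by linarith⟩
  rw [eq_bot_iff]
  refine Subgroup.commutator_le.2 fun g hg h _ => ?_
  obtain ⟨⟨g0, g1, g2⟩, g3, g4⟩ := l2 hg
  rw [Subgroup.mem_bot, commutatorElement_eq_one_iff_mul_comm]
  apply inj
  rw [mul, mul]
  ext i
  fin_cases i <;> simp [mulv, g0, g1, g2, g3, g4] <;> ring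

/-- `G`, viewed as a subgroup of the general linear group `GL(12,ℝ)`, is nilpotent
of class at most 3: the fourth term `γ₄ = lowerCentralSeries _ 3` of its lower
central series is trivial. -/
theorem stmt_2 (H : Subgroup (GL (Fin 6 ⊕ Fin 6) ℝ))
    (hH : ∀ g : GL (Fin 6 ⊕ Fin 6) ℝ,
      g ∈ H ↔ (g : Matrix (Fin 6 ⊕ Fin 6) (Fin 6 ⊕ Fin 6) ℝ) ∈ GSet) :
    lowerCentralSeries H 3 = ⊥ := by
  have ex : ∀ g : H, ∃ x, ((g : GL (Fin 6 ⊕ Fin 6) ℝ) : Matrix _ _ ℝ) = aMat x :=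
    fun g => (hH g).1 g.2
  choose co hco using ex
  change H.lowerCentralSeries 3 = ⊥
  rw [← Subgroup.top_subtype_lowerCentralSeries, lcs_of_coords co ?_ ?_ ?_, Subgroup.map_bot]
  · intro g h e
    apply Subtype.ext
    apply Units.ext
    rw [hco, hco, e]
  · apply aMat_inj
    rw [← hco, aMat_zero]
    rfl
  · intro g h
    apply aMat_inj
    rw [← aMat_mul, ← hco, ← hco, ← hco]
    rfl

end
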